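/- arXiv:1408.5377 — 3 statements merged into one kernel-verified Lean document; each statement's English description precedes it below -/
import Mathlib

section
/- Soundness of lower-bound pruning, condition (2) of Property 2: Let b ∈ A. If there exists a time t with smin b + p b ≤ t < smin b + p b + k b such that the sum of h a over all a ∈ A whose compulsory part contains t (smax a ≤ t < smin a + p a), plus h b, is strictly greater than C, then no consistent assignment σ with σ b = smin b satisfies the RCuSP constraint. -/
/-!
The constraint already fails at the given time `t`. Every activity whose compulsory part contains
`t` is running at `t` under any consistent assignment, so the load at `t` is at least the compulsory
load. With `b` started at `smin b`, the time `t` falls in the slack window of `b`, so the maximum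
over delayed activities is at least `h b`. The two bounds add up to more than `C`.
-/

section RobustCumulative

variable {α T M : Type*} [LinearOrder T] [Add T]

/-- The activities in progress at time `t` under the assignment `σ`. -/
def runningAt (A : Finset α) (p σ : α → T) (t : T) : Finset α :=
  A.filter fun a => σ a ≤ t ∧ t < σ a + p a

/-- The activities whose compulsory part `[smax a, smin a + p a)` contains `t`, hence those
that run at `t` whatever the choice of start times in `[smin a, smax a]`. -/
def compulsoryAt (A : Finset α) (p smin smax : α → T) (t : T) : Finset α :=
  A.filter fun a => smax a ≤ t ∧ t < smin a + p a

/-- The activities whose slack window contains `t` under the assignment `σ`: those that have ended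
by `t`, but would still be able to occupy `t` if delayed within their slack `k`. -/
def delayableAt (A : Finset α) (p k σ : α → T) (t : T) : Finset α :=
  A.filter fun c => σ c + p c ≤ t ∧ t < σ c + p c + k c

/-- Consistency of the assignment `σ` with the start-time domains `[smin a, smax a]`. -/
def IsConsistentAssignment (A : Finset α) (smin smax σ : α → T) : Prop :=
  ∀ a ∈ A, smin a ≤ σ a ∧ σ a ≤ smax a

/-- The RCuSP constraint, i.e. `RobustCumulative` with `r = 1`: the capacity `C` is respected at
all times even if one activity is delayed. The supremum over no delayable activity is `⊥`, which is
`0` for canonically ordered heights. -/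
def SatisfiesRCuSP [AddCommMonoid M] [SemilatticeSup M] [OrderBot M]
    (A : Finset α) (p k : α → T) (h : α → M) (C : M) (σ : α → T) : Prop :=
  ∀ t, ∑ a ∈ runningAt A p σ t, h a + (delayableAt A p k σ t).sup h ≤ C

theorem compulsoryAt_subset_runningAt [AddRightMono T] {A : Finset α} {p smin smax σ : α → T}
    (hσ : IsConsistentAssignment A smin smax σ) (t : T) :
    compulsoryAt A p smin smax t ⊆ runningAt A p σ t := by
  intro a ha
  obtain ⟨haA, hat⟩ := Finset.mem_filter.mp ha
  obtain ⟨hmin, hmax⟩ := hσ a haA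
  have hsub : Set.Ico (smax a) (smin a + p a) ⊆ Set.Ico (σ a) (σ a + p a) :=
    Set.Ico_subset_Ico hmax (by gcongr)
  exact Finset.mem_filter.mpr ⟨haA, hsub hat⟩

variable [AddCommMonoid M] [SemilatticeSup M] [OrderBot M] [IsOrderedAddMonoid M]

theorem SatisfiesRCuSP.sum_runningAt_add_le {A : Finset α} {p k σ : α → T} {h : α → M} {C : M}
    (hσ : SatisfiesRCuSP A p k h C σ) {t : T} {b : α} (hb : b ∈ delayableAt A p k σ t) :
    ∑ a ∈ runningAt A p σ t, h a + h b ≤ C :=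
  calc
    ∑ a ∈ runningAt A p σ t, h a + h b
      ≤ ∑ a ∈ runningAt A p σ t, h a + (delayableAt A p k σ t).sup h := by
        gcongr
        exact Finset.le_sup hb
    _ ≤ C := hσ t

theorem rcusp_lower_bound_pruning_cond2_general [AddRightMono T] [CanonicallyOrderedAdd M]
    {A : Finset α} {p k smin smax σ : α → T} {h : α → M} {C : M} {b : α} {t : T}
    (hσ : IsConsistentAssignment A smin smax σ) (hb : b ∈ delayableAt A p k σ t)
    (hC : C < ∑ a ∈ compulsoryAt A p smin smax t, h a + h b) :
    ¬ SatisfiesRCuSP A p k h C σ := by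
  intro hrobust
  have hload : ∑ a ∈ compulsoryAt A p smin smax t, h a ≤ ∑ a ∈ runningAt A p σ t, h a :=
    Finset.sum_le_sum_of_subset (compulsoryAt_subset_runningAt hσ t)
  have hle : ∑ a ∈ compulsoryAt A p smin smax t, h a + h b ≤ C :=
    (add_le_add_left hload (h b)).trans (hrobust.sum_runningAt_add_le hb)
  exact hC.not_ge hle

end RobustCumulative

/-- Soundness of lower-bound pruning, condition (2) of Property 2: if at some
time `t ∈ [smin b + p b, smin b + p b + k b)` the sum of the heights of the
activities whose compulsory part contains `t`, plus the height of `b`, exceeds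
`C`, then no consistent assignment scheduling `b` at `smin b` satisfies the
RCuSP constraint. -/
theorem rcusp_lower_bound_pruning_cond2
    {α : Type*} (A : Finset α) (p h k smin smax : α → ℕ) (C : ℕ)
    (hp : ∀ a ∈ A, 0 < p a) (hh : ∀ a ∈ A, 0 < h a)
    (hdom : ∀ a ∈ A, smin a ≤ smax a)
    (b : α) (hb : b ∈ A)
    (hfail : ∃ t : ℕ, smin b + p b ≤ t ∧ t < smin b + p b + k b ∧
      (∑ a ∈ A.filter (fun a => smax a ≤ t ∧ t < smin a + p a), h a) + h b > C) :
    ∀ σ : α → ℕ,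
      (∀ a ∈ A, smin a ≤ σ a ∧ σ a ≤ smax a) →
      σ b = smin b →
      ¬ (∀ t : ℕ,
          (∑ a ∈ A.filter (fun a => σ a ≤ t ∧ t < σ a + p a), h a)
            + (A.filter (fun c => σ c + p c ≤ t ∧ t < σ c + p c + k c)).sup h ≤ C) := by
  obtain ⟨t, hend, hslack, hC⟩ := hfail
  exact fun σ hσ hσb => rcusp_lower_bound_pruning_cond2_general hσ
    (Finset.mem_filter.mpr ⟨hb, by rwa [hσb], by rwa [hσb]⟩) hC
end

section
/- Soundness of upper-bound pruning, condition (1) of Property 3: Let b ∈ A. If there exists a time t with smax b ≤ t < smax b + p b such that h b, plus the sum of h a over all a ∈ A with a ≠ b whose compulsory part contains t (smax a ≤ t < smin a + p a), plus the maximum of h a over all a ∈ A with a ≠ b whose K-compulsory part contains t (taken as 0 when no such a exists), is strictly greater than C, then no consistent assignment σ with σ b = smax b satisfies the RCuSP constraint. -/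
/-!
At the time `t` of the overload, every activity whose compulsory part contains `t` is running, and
an activity whose K-compulsory part contains `t` is either still running or in its slack. In the
first case it adds to the load of the running activities, because the compulsory and K-compulsory
parts of an activity are disjoint; in the second its height is bounded by the slack term. So the
profile read off the domains alone bounds the robust load from below. This is applied to the
activities other than `b`: since `b` itself is running at `t`, it adds `h b` to their robust load.
-/

section HeightSums

variable {α M : Type*} [AddCommMonoid M] [LinearOrder M] [IsOrderedAddMonoid M]
  [CanonicallyOrderedAdd M] [OrderBot M]

theorem sum_add_sup_le_sum_add_sup {h : α → M} {S K R L : Finset α} (hSR : S ⊆ R)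
    (hdisj : Disjoint S K) (hK : ∀ a ∈ K, a ∈ R ∨ a ∈ L) :
    ∑ a ∈ S, h a + K.sup h ≤ ∑ a ∈ R, h a + L.sup h := by
  have hsum : ∑ a ∈ S, h a ≤ ∑ a ∈ R, h a := Finset.sum_le_sum_of_subset hSR
  obtain rfl | hne := K.eq_empty_or_nonempty
  · exact add_le_add hsum (Finset.sup_empty.trans_le bot_le)
  obtain ⟨a, haK, hmax⟩ := K.exists_mem_eq_sup hne h
  rw [hmax]
  obtain haR | haL := hK a haK
  · have haS : a ∉ S := Finset.disjoint_right.mp hdisj haK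
    calc ∑ x ∈ S, h x + h a = ∑ x ∈ S.cons a haS, h x := by rw [Finset.sum_cons, add_comm]
      _ ≤ ∑ x ∈ R, h x := Finset.sum_le_sum_of_subset (Finset.cons_subset.mpr ⟨haR, hSR⟩)
      _ ≤ ∑ x ∈ R, h x + L.sup h := le_self_add
  · exact add_le_add hsum (Finset.le_sup haL)

end HeightSums

section Activities

/-- Consistency of the assignment `σ` with the start-time domains of the activities in `A`. -/
def IsConsistent {α T : Type*} [LE T] (A : Finset α) (smin smax σ : α → T) : Prop :=
  ∀ a ∈ A, smin a ≤ σ a ∧ σ a ≤ smax a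

variable {α T : Type*} [Add T] [LinearOrder T]

/-- The activities in execution at time `t` under `σ`. -/
def runningActivities (A : Finset α) (p σ : α → T) (t : T) : Finset α :=
  {a ∈ A | σ a ≤ t ∧ t < σ a + p a}

/-- The activities that have ended by time `t` under `σ`, but whose slack still covers `t`. -/
def slackActivities (A : Finset α) (p k σ : α → T) (t : T) : Finset α :=
  {a ∈ A | σ a + p a ≤ t ∧ t < σ a + p a + k a}

/-- The activities whose compulsory part contains `t`. -/
def compulsoryActivities (A : Finset α) (p smin smax : α → T) (t : T) : Finset α :=
  {a ∈ A | smax a ≤ t ∧ t < smin a + p a}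

/-- The activities whose K-compulsory part contains `t`. -/
def kCompulsoryActivities (A : Finset α) (p k smin smax : α → T) (t : T) : Finset α :=
  {a ∈ A | max (smax a) (smin a + p a) ≤ t ∧ t < smin a + p a + k a}

/-- The resource usage that the RCuSP constraint bounds by the capacity: the load of the running
activities plus the largest height among those in their slack, where an empty maximum is
`⊥`, which is `0` in `ℕ`. -/
def robustLoad {M : Type*} [AddCommMonoid M] [SemilatticeSup M] [OrderBot M]
    (A : Finset α) (p : α → T) (h : α → M) (k σ : α → T) (t : T) : M :=
  ∑ a ∈ runningActivities A p σ t, h a + (slackActivities A p k σ t).sup h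

theorem disjoint_compulsoryActivities_kCompulsoryActivities (A : Finset α)
    (p k smin smax : α → T) (t : T) :
    Disjoint (compulsoryActivities A p smin smax t) (kCompulsoryActivities A p k smin smax t) :=
  Finset.disjoint_filter.mpr fun _ _ hcomp hkcomp =>
    hcomp.2.not_ge ((le_max_right _ _).trans hkcomp.1)

theorem add_robustLoad_erase {M : Type*} [AddCommMonoid M] [SemilatticeSup M] [OrderBot M]
    [DecidableEq α] {A : Finset α} {p : α → T} (h : α → M) (k : α → T) {σ : α → T} {t : T}
    {b : α} (hb : b ∈ runningActivities A p σ t) :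
    h b + robustLoad (A.erase b) p h k σ t = robustLoad A p h k σ t := by
  have hrunning : runningActivities (A.erase b) p σ t = (runningActivities A p σ t).erase b :=
    Finset.filter_erase _ _ _
  have hslack : slackActivities (A.erase b) p k σ t = slackActivities A p k σ t := by
    have hb_slack : b ∉ slackActivities A p k σ t := fun hmem =>
      (Finset.mem_filter.mp hb).2.2.not_ge (Finset.mem_filter.mp hmem).2.1
    exact (Finset.filter_erase _ _ _).trans (Finset.erase_eq_of_notMem hb_slack)
  rw [robustLoad, robustLoad, hrunning, hslack, ← add_assoc, Finset.add_sum_erase _ h hb]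

variable [AddRightMono T] {A : Finset α} {p k smin smax σ : α → T}

theorem IsConsistent.compulsoryActivities_subset_runningActivities
    (hσ : IsConsistent A smin smax σ) (t : T) :
    compulsoryActivities A p smin smax t ⊆ runningActivities A p σ t :=
  Finset.monotone_filter_right A fun a ha ⟨hstart, hend⟩ =>
    ⟨(hσ a ha).2.trans hstart, hend.trans_le (by gcongr; exact (hσ a ha).1)⟩

theorem IsConsistent.mem_runningActivities_or_mem_slackActivities
    (hσ : IsConsistent A smin smax σ) {t : T} {a : α}
    (ha : a ∈ kCompulsoryActivities A p k smin smax t) :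
    a ∈ runningActivities A p σ t ∨ a ∈ slackActivities A p k σ t := by
  obtain ⟨haA, hstart, hend⟩ := Finset.mem_filter.mp ha
  obtain ⟨hmin, hmax⟩ := hσ a haA
  obtain hrun | hended := lt_or_ge t (σ a + p a)
  · exact .inl (Finset.mem_filter.mpr ⟨haA, hmax.trans ((le_max_left _ _).trans hstart), hrun⟩)
  · exact .inr (Finset.mem_filter.mpr ⟨haA, hended, hend.trans_le (by gcongr)⟩)

variable {M : Type*} [AddCommMonoid M] [LinearOrder M] [IsOrderedAddMonoid M]
  [CanonicallyOrderedAdd M] [OrderBot M]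

theorem IsConsistent.sum_compulsory_add_sup_kCompulsory_le_robustLoad
    (hσ : IsConsistent A smin smax σ) (h : α → M) (t : T) :
    ∑ a ∈ compulsoryActivities A p smin smax t, h a
      + (kCompulsoryActivities A p k smin smax t).sup h ≤ robustLoad A p h k σ t :=
  sum_add_sup_le_sum_add_sup (hσ.compulsoryActivities_subset_runningActivities t)
    (disjoint_compulsoryActivities_kCompulsoryActivities A p k smin smax t)
    fun _ => hσ.mem_runningActivities_or_mem_slackActivities

theorem rcusp_upper_bound_pruning_cond1_general [DecidableEq α]
    (hσ : IsConsistent A smin smax σ) {h : α → M} {C : M} {t : T} {b : α}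
    (hb : b ∈ runningActivities A p σ t)
    (hfail : C < h b + ∑ a ∈ compulsoryActivities (A.erase b) p smin smax t, h a
      + (kCompulsoryActivities (A.erase b) p k smin smax t).sup h) :
    C < robustLoad A p h k σ t := by
  have hσ_erase : IsConsistent (A.erase b) smin smax σ :=
    fun a ha => hσ a (Finset.mem_of_mem_erase ha)
  calc C < h b + (∑ a ∈ compulsoryActivities (A.erase b) p smin smax t, h a
        + (kCompulsoryActivities (A.erase b) p k smin smax t).sup h) := by rwa [← add_assoc]
    _ ≤ h b + robustLoad (A.erase b) p h k σ t := by
        gcongr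
        exact hσ_erase.sum_compulsory_add_sup_kCompulsory_le_robustLoad h t
    _ = robustLoad A p h k σ t := add_robustLoad_erase h k hb

end Activities

/-- Soundness of upper-bound pruning, condition (1) of Property 3: if at some
time `t ∈ [smax b, smax b + p b)` the height of `b`, plus the sum of the heights
of the other activities whose compulsory part contains `t`, plus the maximum
height among activities other than `b` whose K-compulsory part contains `t`
(`0` if none), exceeds `C`, then no consistent assignment scheduling `b` at
`smax b` satisfies the RCuSP constraint. -/
theorem rcusp_upper_bound_pruning_cond1
    {α : Type*} [DecidableEq α] (A : Finset α) (p h k smin smax : α → ℕ) (C : ℕ)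
    (hp : ∀ a ∈ A, 0 < p a) (hh : ∀ a ∈ A, 0 < h a)
    (hdom : ∀ a ∈ A, smin a ≤ smax a)
    (b : α) (hb : b ∈ A)
    (hfail : ∃ t : ℕ, smax b ≤ t ∧ t < smax b + p b ∧
      h b
        + (∑ a ∈ A.filter (fun a => a ≠ b ∧ smax a ≤ t ∧ t < smin a + p a), h a)
        + (A.filter (fun a => a ≠ b ∧
            max (smax a) (smin a + p a) ≤ t ∧ t < smin a + p a + k a)).sup h
        > C) :
    ∀ σ : α → ℕ,
      (∀ a ∈ A, smin a ≤ σ a ∧ σ a ≤ smax a) →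
      σ b = smax b →
      ¬ (∀ t : ℕ,
          (∑ a ∈ A.filter (fun a => σ a ≤ t ∧ t < σ a + p a), h a)
            + (A.filter (fun c => σ c + p c ≤ t ∧ t < σ c + p c + k c)).sup h ≤ C) := by
  intro σ hσ hσb hrcusp
  obtain ⟨t, hbt, htb, hgt⟩ := hfail
  have hrun : b ∈ runningActivities A p σ t :=
    Finset.mem_filter.mpr ⟨hb, by rwa [hσb], by rwa [hσb]⟩
  simp only [← Finset.filter_filter _ _ A, Finset.filter_ne'] at hgt
  exact (rcusp_upper_bound_pruning_cond1_general hσ hrun hgt).not_ge (hrcusp t)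
end

section
/- Soundness of Time-Table pruning for Cumulative (Property 1 rule): Let b ∈ A. If there exists a time t with smin b ≤ t < smin b + p b such that h b, plus the sum of h a over all a ∈ A with a ≠ b whose compulsory part contains t (smax a ≤ t < smin a + p a), is strictly greater than C, then no consistent assignment σ with σ b = smin b satisfies the cumulative constraint. -/
/-!
A consistent start time `σ a` lies between `smin a` and `smax a`, so `a` runs throughout its
compulsory part, and the load of the compulsory parts of the other activities is a lower bound for
the load they actually cause. If `b` runs at `t` as well, it contributes `h b` on top of that bound.
-/

section TimeTable

variable {α T M : Type*} [AddCommMonoid M]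

/-- The load (resource usage) at time `t` of the activities in `A` with heights `h`, when activity
`a` occupies the set of times `I a`. Leaving `I` arbitrary covers both the actual resource profile
of a schedule (`I = occupiedInterval p σ`) and its time-table lower bound
(`I = compulsoryPart p smin smax`). -/
def load (A : Finset α) (h : α → M) (I : α → Set T) (t : T) [DecidablePred (t ∈ I ·)] : M :=
  ∑ a ∈ A with t ∈ I a, h a

theorem load_mono [Preorder M] [AddLeftMono M] {A : Finset α} {h : α → M} {I J : α → Set T}
    {t : T} [DecidablePred (t ∈ I ·)] [DecidablePred (t ∈ J ·)]
    (hh : ∀ a ∈ A, 0 ≤ h a) (hIJ : ∀ a ∈ A, I a ⊆ J a) :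
    load A h I t ≤ load A h J t :=
  Finset.sum_le_sum_of_subset_of_nonneg
    (Finset.monotone_filter_right A fun a ha hta => hIJ a ha hta)
    fun a ha _ => hh a (Finset.mem_of_mem_filter a ha)

theorem load_erase [DecidableEq α] (A : Finset α) (h : α → M) (I : α → Set T) (t : T)
    [DecidablePred (t ∈ I ·)] (b : α) :
    load (A.erase b) h I t = ∑ a ∈ A with a ≠ b ∧ t ∈ I a, h a := by
  rw [load, ← Finset.filter_ne', Finset.filter_filter]

theorem add_load_erase [DecidableEq α] {A : Finset α} {I : α → Set T} {t : T}
    [DecidablePred (t ∈ I ·)] {b : α} (h : α → M) (hb : b ∈ A) (ht : t ∈ I b) :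
    h b + load (A.erase b) h I t = load A h I t := by
  rw [load, Finset.filter_erase]
  exact Finset.add_sum_erase _ h (Finset.mem_filter.2 ⟨hb, ht⟩)

variable [Preorder T] [Add T]

/-- The half-open interval of times during which activity `a` of duration `p a` runs when it starts
at `σ a`. It is reducible so that membership is decidable. -/
abbrev occupiedInterval (p σ : α → T) (a : α) : Set T :=
  Set.Ico (σ a) (σ a + p a)

/-- The compulsory part of activity `a` of duration `p a`: the times between its latest start
`smax a` and its earliest end `smin a + p a`. It is reducible so that membership is decidable. -/
abbrev compulsoryPart (p smin smax : α → T) (a : α) : Set T :=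
  Set.Ico (smax a) (smin a + p a)

variable [AddRightMono T]

theorem compulsoryPart_subset_occupiedInterval {smin smax σ : α → T} {a : α} (p : α → T)
    (hσ : σ a ∈ Set.Icc (smin a) (smax a)) :
    compulsoryPart p smin smax a ⊆ occupiedInterval p σ a :=
  Set.Ico_subset_Ico hσ.2 (by gcongr; exact hσ.1)

theorem cumulative_time_table_pruning_general [DecidableLE T] [DecidableLT T] [DecidableEq α]
    [Preorder M] [AddLeftMono M]
    {A : Finset α} {p smin smax σ : α → T} {h : α → M} {C : M} {b : α} {t : T}
    (hh : ∀ a ∈ A.erase b, 0 ≤ h a) (hσ : ∀ a ∈ A.erase b, σ a ∈ Set.Icc (smin a) (smax a))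
    (hb : b ∈ A) (ht : t ∈ occupiedInterval p σ b)
    (hfail : C < h b + load (A.erase b) h (compulsoryPart p smin smax) t) :
    C < load A h (occupiedInterval p σ) t :=
  calc
    C < h b + load (A.erase b) h (compulsoryPart p smin smax) t := hfail
    _ ≤ h b + load (A.erase b) h (occupiedInterval p σ) t := by
      gcongr
      exact load_mono hh fun a ha => compulsoryPart_subset_occupiedInterval p (hσ a ha)
    _ = load A h (occupiedInterval p σ) t := add_load_erase h hb ht

end TimeTable

/-- Soundness of Time-Table pruning for Cumulative (Property 1 rule): if at some
time `t ∈ [smin b, smin b + p b)` the height of `b`, plus the sum of the heights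
of the other activities whose compulsory part contains `t`, exceeds `C`, then no
consistent assignment scheduling `b` at `smin b` satisfies the cumulative
constraint. -/
theorem cumulative_time_table_pruning
    {α : Type*} [DecidableEq α] (A : Finset α) (p h smin smax : α → ℕ) (C : ℕ)
    (hp : ∀ a ∈ A, 0 < p a) (hh : ∀ a ∈ A, 0 < h a)
    (hdom : ∀ a ∈ A, smin a ≤ smax a)
    (b : α) (hb : b ∈ A)
    (hfail : ∃ t : ℕ, smin b ≤ t ∧ t < smin b + p b ∧
      h b + (∑ a ∈ A.filter (fun a => a ≠ b ∧ smax a ≤ t ∧ t < smin a + p a), h a) > C) :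
    ∀ σ : α → ℕ,
      (∀ a ∈ A, smin a ≤ σ a ∧ σ a ≤ smax a) →
      σ b = smin b →
      ¬ (∀ t : ℕ,
          (∑ a ∈ A.filter (fun a => σ a ≤ t ∧ t < σ a + p a), h a) ≤ C) := by
  obtain ⟨t, hbt, htb, hC⟩ := hfail
  intro σ hσ hσb hcum
  have ht : t ∈ occupiedInterval p σ b := ⟨hσb.trans_le hbt, hσb ▸ htb⟩
  exact (cumulative_time_table_pruning_general (fun a _ => (h a).zero_le)
    (fun a ha => hσ a (Finset.mem_of_mem_erase ha)) hb ht
    (by rwa [load_erase])).not_ge (hcum t)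
end
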